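/- arXiv:2107.05774 — 2 statements merged into one kernel-verified Lean document; each statement's English description precedes it below -/
import Mathlib

section
/- Let p be a primitive polynomial of degree k over GF(2) and let n satisfy k ≤ n ≤ 2^k − 1. Then the Hamming weights of the 2^k codewords of the truncated PR code S(p,n) have mean n/2 and variance n/4; explicitly, Σ_{c ∈ S(p,n)} w(c) = 2^{k−1}·n, and, as an identity of integers, Σ_{c ∈ S(p,n)} (n − 2·w(c))² = 2^k·n. -/
/-!
Write `K = GF(2^k)` and let `α ∈ K` have order `2^k - 1` with minimal polynomial `p`.  As `α`
generates `K`, the powers `1, α, …, α^(k-1)` form a basis of `K` over `GF(2)`, so a sequence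
satisfying the recurrence with characteristic polynomial `p` is the same thing as a linear
functional `f` on `K`, via `c_j = f (α^j)`: this identifies `S(p,n)` with the dual space of `K`
(`bijOn_evalPowers`), which has `2^k` elements.

With `χ : ZMod 2 → ℤ` the nontrivial sign character, `n - 2 w(c) = ∑_j χ (c_j)`.  For `v ≠ 0` the
character sum `∑_f χ (f v)` over the dual vanishes (`sum_chi_eq_zero`).  Taking `v = α^j` gives the
mean.  Expanding the square and taking `v = α^i + α^j`, which is nonzero for `i ≠ j` because
`i, j < n ≤ 2^k - 1` and `α` has order `2^k - 1`, leaves only the `n` diagonal terms, each `2^k`.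
-/

/-- The truncated primitive rateless (PR) code `S(p,n)` for a polynomial `p` of degree `k`
over `GF(2)`: the set of vectors `c ∈ GF(2)^n` satisfying the linear recurrence
`∑_{i=0}^k p_i c_{j+i} = 0` for every `j` with `0 ≤ j ≤ n - k - 1`. -/
def PRcode (k : ℕ) (p : Polynomial (ZMod 2)) (n : ℕ) : Set (Fin n → ZMod 2) :=
  {c | ∀ j : ℕ, j + k < n →
    ∑ i ∈ Finset.range (k + 1), p.coeff i * (if h : j + i < n then c ⟨j + i, h⟩ else 0) = 0}

/-- `p` is a primitive polynomial of degree `k` over `GF(2)`: it is the minimal polynomial of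
some element `α` of `GF(2^k)` of multiplicative order `2^k - 1`. -/
def IsPrimitivePoly (k : ℕ) (p : Polynomial (ZMod 2)) : Prop :=
  ∃ α : GaloisField 2 k, orderOf α = 2 ^ k - 1 ∧ p = minpoly (ZMod 2) α

/-- The nontrivial additive character of `GF(2)`, with integer values. -/
def chi (x : ZMod 2) : ℤ := if x = 0 then 1 else -1

lemma chi_zero : chi 0 = 1 := rfl

lemma chi_add (x y : ZMod 2) : chi (x + y) = chi x * chi y := by
  revert x y; decide

lemma sub_two_mul_hammingNorm {n : ℕ} (c : Fin n → ZMod 2) :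
    (n : ℤ) - 2 * (hammingNorm c : ℤ) = ∑ j, chi (c j) := by
  have h : ∀ x : ZMod 2, chi x = 1 - 2 * (if x ≠ 0 then 1 else 0) := by decide
  simp only [h, Finset.sum_sub_distrib, ← Finset.mul_sum, hammingNorm, Finset.sum_boole]
  simp

section Dual

variable {K : Type*} [Field K] [Algebra (ZMod 2) K]

/-- Translating by a functional which is `1` at `v` flips the sign of every term. -/
lemma sum_chi_eq_zero [Fintype (Module.Dual (ZMod 2) K)] {v : K} (hv : v ≠ 0) :
    ∑ f : Module.Dual (ZMod 2) K, chi (f v) = 0 := by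
  obtain ⟨g, hg⟩ := Module.Projective.exists_dual_ne_zero (ZMod 2) hv
  have h1 : ∀ x : ZMod 2, x ≠ 0 → chi x = -1 := by decide
  have h := Equiv.sum_comp (Equiv.addRight g) fun f : Module.Dual (ZMod 2) K => chi (f v)
  simp only [Equiv.coe_addRight, LinearMap.add_apply, chi_add, h1 _ hg, ← Finset.sum_mul] at h
  linarith

/-- The vector `(f 1, f α, …, f (α^(n-1)))`. -/
def evalPowers (α : K) (n : ℕ) (f : Module.Dual (ZMod 2) K) : Fin n → ZMod 2 :=
  fun j => f (α ^ (j : ℕ))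

/-- If `1, α, …, α^(k-1)` is a basis of `K`, evaluation at the powers of `α` identifies the dual
space of `K` with the truncated code of the minimal polynomial of `α`. -/
lemma bijOn_evalPowers {k n : ℕ} (hkn : k ≤ n) (α : K)
    (hdeg : (minpoly (ZMod 2) α).natDegree = k) (hα : IsIntegral (ZMod 2) α)
    (b : Module.Basis (Fin k) (ZMod 2) K) (hb : ∀ i, b i = α ^ (i : ℕ)) :
    Set.BijOn (evalPowers α n) Set.univ (PRcode k (minpoly (ZMod 2) α) n) := by
  have hrec : ∀ (f : Module.Dual (ZMod 2) K) (j : ℕ),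
      ∑ i ∈ Finset.range (k + 1), (minpoly (ZMod 2) α).coeff i * f (α ^ (j + i)) = 0 := by
    intro f j
    have h0 := minpoly.aeval (ZMod 2) α
    rw [Polynomial.aeval_eq_sum_range, hdeg] at h0
    have h1 := congrArg (fun x => f (α ^ j * x)) h0
    simpa [Finset.mul_sum, pow_add] using h1
  refine ⟨?_, ?_, ?_⟩
  · intro f _ j hj
    rw [← hrec f j]
    refine Finset.sum_congr rfl fun i hi => ?_
    have : j + i < n := by have := Finset.mem_range.1 hi; omega
    simp [this, evalPowers]
  · intro f _ g _ hfg
    refine b.ext fun i => ?_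
    rw [hb]
    exact congrFun hfg ⟨i, by omega⟩
  · intro c hc
    -- The functional is prescribed on the basis by the first `k` coordinates of `c`; the recurrence
    -- then forces agreement at all later coordinates.
    let f : Module.Dual (ZMod 2) K := b.constr (ZMod 2) fun i => c ⟨i, by omega⟩
    refine ⟨f, trivial, ?_⟩
    have key : ∀ m (hm : m < n), f (α ^ m) = c ⟨m, hm⟩ := by
      intro m
      induction m using Nat.strong_induction_on with
      | _ m ih =>
        intro hm
        by_cases hmk : m < k
        · have := b.constr_basis (ZMod 2) (fun i => c ⟨i, by omega⟩) ⟨m, hmk⟩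
          rwa [hb] at this
        · have hlead : (minpoly (ZMod 2) α).coeff k = 1 := by
            rw [← hdeg]; exact minpoly.monic hα
          have h1 := hrec f (m - k)
          have h2 := hc (m - k) (by omega)
          rw [Finset.sum_range_succ] at h1 h2
          have hmk' : m - k + k = m := by omega
          have h3 : ∑ i ∈ Finset.range k, (minpoly (ZMod 2) α).coeff i *
                (if h : m - k + i < n then c ⟨m - k + i, h⟩ else 0) =
              ∑ i ∈ Finset.range k, (minpoly (ZMod 2) α).coeff i * f (α ^ (m - k + i)) := by
            refine Finset.sum_congr rfl fun i hi => ?_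
            have := Finset.mem_range.1 hi
            rw [dif_pos (by omega), ih (m - k + i) (by omega) (by omega)]
          rw [h3] at h2
          simp only [hmk', hlead, one_mul, dif_pos hm] at h1 h2
          exact add_left_cancel (h1.trans h2.symm)
    funext j
    exact key j j.2

end Dual

/-- An element of order `2^k - 1` generates `GF(2^k)`, so its minimal polynomial has degree `k`. -/
lemma natDegree_minpoly_of_orderOf {k : ℕ} (hk : 1 ≤ k) (α : GaloisField 2 k)
    (hα : orderOf α = 2 ^ k - 1) : (minpoly (ZMod 2) α).natDegree = k := by
  have hcard : Nat.card (GaloisField 2 k) = 2 ^ k := GaloisField.card 2 k (by omega)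
  have h2 : 2 ≤ 2 ^ k := by simpa using Nat.pow_le_pow_right (n := 2) (by norm_num) hk
  have hα0 : α ≠ 0 := by
    rintro rfl
    rw [orderOf_zero] at hα
    omega
  have htop : Subgroup.zpowers (Units.mk0 α hα0) = ⊤ := by
    apply Subgroup.eq_top_of_card_eq
    rw [Nat.card_zpowers, ← orderOf_units, Units.val_mk0, hα, Nat.card_units, hcard]
  have hadj : IntermediateField.adjoin (ZMod 2) {α} = ⊤ := by
    rw [eq_top_iff]
    intro x _
    by_cases hx : x = 0
    · rw [hx]; exact zero_mem _
    · have hmem : Units.mk0 x hx ∈ Subgroup.zpowers (Units.mk0 α hα0) := htop ▸ trivial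
      obtain ⟨m, hm⟩ := hmem
      have : α ^ m = x := by simpa using congrArg Units.val hm
      rw [← this]
      exact zpow_mem (IntermediateField.mem_adjoin_simple_self (ZMod 2) α) m
  rw [(Field.primitive_element_iff_minpoly_natDegree_eq (ZMod 2) α).1 hadj]
  exact GaloisField.finrank 2 (by omega)

open scoped Classical in
theorem stmt3 (k n : ℕ) (hk : 1 ≤ k) (hkn : k ≤ n) (hn : n ≤ 2 ^ k - 1)
    (p : Polynomial (ZMod 2)) (hp : IsPrimitivePoly k p) :
    (∑ c ∈ Finset.univ.filter (fun c : Fin n → ZMod 2 => c ∈ PRcode k p n),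
        hammingNorm c) = 2 ^ (k - 1) * n ∧
    (∑ c ∈ Finset.univ.filter (fun c : Fin n → ZMod 2 => c ∈ PRcode k p n),
        ((n : ℤ) - 2 * (hammingNorm c : ℤ)) ^ 2) = (2 : ℤ) ^ k * (n : ℤ) := by
  obtain ⟨α, hord, rfl⟩ := hp
  have hdeg := natDegree_minpoly_of_orderOf hk α hord
  have hrank : Module.finrank (ZMod 2) (GaloisField 2 k) = k := GaloisField.finrank 2 (by omega)
  have hα0 : α ≠ 0 := by
    rintro rfl
    rw [orderOf_zero] at hord
    omega
  have hli : LinearIndependent (ZMod 2) fun i : Fin k => α ^ (i : ℕ) := by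
    have := linearIndependent_pow (K := ZMod 2) α
    rwa [hdeg] at this
  have : Nonempty (Fin k) := ⟨⟨0, hk⟩⟩
  have hbij := bijOn_evalPowers hkn α hdeg (Algebra.IsIntegral.isIntegral α)
    (basisOfLinearIndependentOfCardEqFinrank hli (by simp [hrank])) (by simp)
  have : Finite (Module.Dual (ZMod 2) (GaloisField 2 k)) := Module.finite_of_finite (ZMod 2)
  have : Fintype (Module.Dual (ZMod 2) (GaloisField 2 k)) := Fintype.ofFinite _
  have hcard : Fintype.card (Module.Dual (ZMod 2) (GaloisField 2 k)) = 2 ^ k := by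
    rw [Module.card_eq_pow_finrank (K := ZMod 2), Subspace.dual_finrank_eq, hrank, ZMod.card]
  have hsum : ∀ g : (Fin n → ZMod 2) → ℤ,
      ∑ c ∈ Finset.univ.filter (fun c : Fin n → ZMod 2 =>
        c ∈ PRcode k (minpoly (ZMod 2) α) n), g c =
      ∑ f : Module.Dual (ZMod 2) (GaloisField 2 k), g (evalPowers α n f) := by
    intro g
    symm
    refine Finset.sum_bij (fun f _ => evalPowers α n f) ?_ ?_ ?_ (fun _ _ => rfl)
    · intro f _
      simpa using hbij.mapsTo (Set.mem_univ f)
    · intro f _ g _ h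
      exact hbij.injOn (Set.mem_univ f) (Set.mem_univ g) h
    · intro c hc
      obtain ⟨f, -, hf⟩ := hbij.surjOn (by simpa using hc)
      exact ⟨f, Finset.mem_univ f, hf⟩
  have hmean : ∑ f : Module.Dual (ZMod 2) (GaloisField 2 k),
      ((n : ℤ) - 2 * (hammingNorm (evalPowers α n f) : ℤ)) = 0 := by
    simp only [sub_two_mul_hammingNorm]
    rw [Finset.sum_comm]
    exact Finset.sum_eq_zero fun j _ => sum_chi_eq_zero (pow_ne_zero _ hα0)
  constructor
  · have h1 := hsum fun c => (hammingNorm c : ℤ)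
    rw [Finset.sum_sub_distrib, ← Finset.mul_sum, ← h1, Finset.sum_const, Finset.card_univ,
      hcard] at hmean
    have h2 : 2 ^ k = 2 * 2 ^ (k - 1) := by rw [← pow_succ', Nat.sub_add_cancel hk]
    rw [h2] at hmean
    zify
    simp only [nsmul_eq_mul] at hmean
    push_cast at hmean
    linarith
  · rw [hsum fun c => ((n : ℤ) - 2 * (hammingNorm c : ℤ)) ^ 2]
    simp only [sub_two_mul_hammingNorm, sq, Finset.sum_mul_sum, ← chi_add]
    rw [Finset.sum_comm]
    have hrow : ∀ i : Fin n, ∑ f : Module.Dual (ZMod 2) (GaloisField 2 k), ∑ j : Fin n,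
        chi (evalPowers α n f i + evalPowers α n f j) = 2 ^ k := by
      intro i
      rw [Finset.sum_comm, Finset.sum_eq_single i]
      · simp [CharTwo.add_self_eq_zero, chi_zero, hcard]
      · intro j _ hji
        simp only [evalPowers, ← map_add]
        refine sum_chi_eq_zero fun h => hji ?_
        rw [CharTwo.add_eq_zero] at h
        have := pow_injOn_Iio_orderOf (x := α) (by rw [Set.mem_Iio, hord]; omega)
          (by rw [Set.mem_Iio, hord]; omega) h
        exact Fin.ext this.symm
      · simp
    simp only [hrow]
    simp [mul_comm]
end

section
/- Let p be a primitive polynomial of degree k over GF(2) and let n satisfy k ≤ n and n + 2 ≤ 2^k − 1. Then the average Hamming weight of the truncated PR code S(p,n+2) equals the average Hamming weight of S(p,n) plus 1; explicitly, Σ_{c ∈ S(p,n+2)} w(c) = Σ_{c ∈ S(p,n)} w(c) + 2^k. -/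
/-- Translation by a functional `ψ` with `ψ x = 1` exchanges the functionals vanishing at `x` with
those that do not, so exactly half of them do not vanish. -/
lemma two_mul_card_dual_apply_ne_zero {V : Type*} [AddCommGroup V] [Module (ZMod 2) V]
    [Fintype (Module.Dual (ZMod 2) V)] (x : V) (hx : x ≠ 0) :
    2 * (Finset.univ.filter (fun φ : Module.Dual (ZMod 2) V => φ x ≠ 0)).card =
      Fintype.card (Module.Dual (ZMod 2) V) := by
  classical
  obtain ⟨ψ, hψ⟩ : ∃ ψ : Module.Dual (ZMod 2) V, ψ x ≠ 0 := by
    by_contra! h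
    exact hx ((Module.forall_dual_apply_eq_zero_iff (ZMod 2) x).1 h)
  have key : ∀ a b : ZMod 2, b ≠ 0 → (a ≠ 0 ↔ ¬ (a + b ≠ 0)) := by decide
  have h : (Finset.univ.filter (fun φ : Module.Dual (ZMod 2) V => φ x ≠ 0)).card =
      (Finset.univ.filter (fun φ : Module.Dual (ZMod 2) V => ¬ φ x ≠ 0)).card := by
    refine Finset.card_equiv (Equiv.addRight ψ) fun φ => ?_
    simp only [Finset.mem_filter, Finset.mem_univ, true_and, Equiv.coe_addRight,
      LinearMap.add_apply]
    exact key _ _ hψ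
  have h2 := Finset.card_filter_add_card_filter_not (s := Finset.univ)
    (fun φ : Module.Dual (ZMod 2) V => φ x ≠ 0)
  rw [Finset.card_univ] at h2
  omega

/-- Codewords of `S(p,m)`, `p` the minimal polynomial of a generator `α` of degree `k ≤ m`,
are parametrized bijectively by functionals `φ` via `c_i = φ(α^i)`. -/
lemma sum_PRcode_eq_sum_dual {k m : ℕ} (hkm : k ≤ m) {F : Type*} [Field F] [Algebra (ZMod 2) F]
    [FiniteDimensional (ZMod 2) F] [Fintype (Module.Dual (ZMod 2) F)]
    (α : F) (hdeg : (minpoly (ZMod 2) α).natDegree = k)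
    (hrank : Module.finrank (ZMod 2) F = k)
    [DecidablePred fun c => c ∈ PRcode k (minpoly (ZMod 2) α) m]
    (f : (Fin m → ZMod 2) → ℕ) :
    ∑ c ∈ Finset.univ.filter (fun c : Fin m → ZMod 2 => c ∈ PRcode k (minpoly (ZMod 2) α) m), f c =
      ∑ φ : Module.Dual (ZMod 2) F, f (fun i => φ (α ^ (i : ℕ))) := by
  have hint : IsIntegral (ZMod 2) α := Algebra.IsIntegral.isIntegral α
  have hli : LinearIndependent (ZMod 2) (fun i : Fin k => α ^ (i : ℕ)) := by
    have := linearIndependent_pow (K := ZMod 2) α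
    rwa [hdeg] at this
  obtain ⟨b, hb⟩ : ∃ b : Module.Basis (Fin k) (ZMod 2) F, ∀ i, b i = α ^ (i : ℕ) := by
    have hspan : ⊤ ≤ Submodule.span (ZMod 2) (Set.range fun i : Fin k => α ^ (i : ℕ)) :=
      (hli.span_eq_top_of_card_eq_finrank' (by simp [hrank])).ge
    exact ⟨Module.Basis.mk hli hspan, fun i => Module.Basis.mk_apply hli hspan i⟩
  have hlead : (minpoly (ZMod 2) α).coeff k = 1 := by
    have := minpoly.monic hint
    rwa [Polynomial.Monic, Polynomial.leadingCoeff, hdeg] at this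
  -- Any functional turns `α ^ j * p(α) = 0` into the recurrence.
  have hrec : ∀ (φ : Module.Dual (ZMod 2) F) (j : ℕ),
      ∑ i ∈ Finset.range (k + 1), (minpoly (ZMod 2) α).coeff i * φ (α ^ (j + i)) = 0 := by
    intro φ j
    have h0 := minpoly.aeval (ZMod 2) α
    rw [Polynomial.aeval_eq_sum_range, hdeg] at h0
    have h1 := congrArg (fun y => φ (α ^ j * y)) h0
    simpa [Finset.mul_sum, mul_smul_comm, ← pow_add] using h1
  symm
  refine Finset.sum_bij (fun φ _ => fun i : Fin m => φ (α ^ (i : ℕ))) ?_ ?_ ?_ ?_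
  · intro φ _
    rw [Finset.mem_filter]
    refine ⟨Finset.mem_univ _, fun j hj => ?_⟩
    rw [← hrec φ j]
    refine Finset.sum_congr rfl fun i hi => ?_
    rw [dif_pos (by rw [Finset.mem_range] at hi; omega)]
  · intro φ _ ψ _ h
    refine b.ext fun i => ?_
    rw [hb]
    exact congrFun h ⟨i, by omega⟩
  · intro c hc
    have hc' : c ∈ PRcode k (minpoly (ZMod 2) α) m := (Finset.mem_filter.1 hc).2
    refine ⟨b.constr (ZMod 2) (fun i : Fin k => c ⟨i, by omega⟩), Finset.mem_univ _, ?_⟩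
    set φ : Module.Dual (ZMod 2) F := b.constr (ZMod 2) (fun i : Fin k => c ⟨i, by omega⟩) with hφ
    have main : ∀ (i : ℕ) (hi : i < m), φ (α ^ i) = c ⟨i, hi⟩ := by
      intro i
      induction i using Nat.strong_induction_on with
      | _ i ih =>
        intro hi
        by_cases hik : i < k
        · have := b.constr_basis (ZMod 2) (fun i : Fin k => c ⟨i, by omega⟩) ⟨i, hik⟩
          rwa [hb] at this
        · -- Monicity expresses the term of index `i = j + k` through the `k` preceding ones.
          obtain ⟨j, rfl⟩ : ∃ j, i = j + k := ⟨i - k, by omega⟩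
          have h1 := hrec φ j
          have h2 := hc' j hi
          rw [Finset.sum_range_succ, hlead, one_mul] at h1 h2
          rw [dif_pos hi] at h2
          have h3 : ∑ i ∈ Finset.range k, (minpoly (ZMod 2) α).coeff i * φ (α ^ (j + i)) =
              ∑ i ∈ Finset.range k, (minpoly (ZMod 2) α).coeff i *
                (if h : j + i < m then c ⟨j + i, h⟩ else 0) := by
            refine Finset.sum_congr rfl fun i hi' => ?_
            rw [Finset.mem_range] at hi'
            rw [dif_pos (by omega), ih (j + i) (by omega) (by omega)]
          rw [h3] at h1
          exact add_left_cancel (h1.trans h2.symm)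
    funext i
    exact main i i.2
  · intro φ _
    rfl

/-- Every coordinate of `S(p,m)` is balanced, so the average weight is `m / 2`. -/
lemma two_mul_sum_hammingNorm_PRcode {k m : ℕ} (hk : 1 ≤ k) (hkm : k ≤ m)
    (p : Polynomial (ZMod 2)) (hp : IsPrimitivePoly k p)
    [DecidablePred fun c => c ∈ PRcode k p m] :
    2 * ∑ c ∈ Finset.univ.filter (fun c : Fin m → ZMod 2 => c ∈ PRcode k p m), hammingNorm c =
      m * 2 ^ k := by
  obtain ⟨α, hα, rfl⟩ := hp
  have hk0 : k ≠ 0 := by omega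
  have hrank := GaloisField.finrank 2 hk0
  have : Finite (Module.Dual (ZMod 2) (GaloisField 2 k)) := Module.finite_of_finite (ZMod 2)
  have : Fintype (Module.Dual (ZMod 2) (GaloisField 2 k)) := Fintype.ofFinite _
  have hcard : Fintype.card (Module.Dual (ZMod 2) (GaloisField 2 k)) = 2 ^ k := by
    rw [Module.card_eq_pow_finrank (K := ZMod 2), Subspace.dual_finrank_eq, hrank, ZMod.card]
  have hα0 : α ≠ 0 := by
    rintro rfl
    rw [orderOf_zero] at hα
    have : 2 ^ 1 ≤ 2 ^ k := Nat.pow_le_pow_right (by norm_num) hk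
    omega
  rw [sum_PRcode_eq_sum_dual hkm α (natDegree_minpoly_of_orderOf hk α hα) hrank]
  simp only [hammingNorm, Finset.card_filter]
  rw [Finset.sum_comm, Finset.mul_sum]
  simp only [← Finset.card_filter]
  rw [Finset.sum_congr rfl fun (i : Fin m) _ =>
    two_mul_card_dual_apply_ne_zero (α ^ (i : ℕ)) (pow_ne_zero _ hα0)]
  simp [hcard]

open scoped Classical in
theorem stmt4 (k n : ℕ) (hk : 1 ≤ k) (hkn : k ≤ n) (hn : n + 2 ≤ 2 ^ k - 1)
    (p : Polynomial (ZMod 2)) (hp : IsPrimitivePoly k p) :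
    (∑ c ∈ Finset.univ.filter (fun c : Fin (n + 2) → ZMod 2 => c ∈ PRcode k p (n + 2)),
        hammingNorm c) =
      (∑ c ∈ Finset.univ.filter (fun c : Fin n → ZMod 2 => c ∈ PRcode k p n),
        hammingNorm c) + 2 ^ k := by
  have h1 := two_mul_sum_hammingNorm_PRcode hk (show k ≤ n + 2 by omega) p hp
  have h2 := two_mul_sum_hammingNorm_PRcode hk hkn p hp
  rw [add_mul] at h1
  omega
end
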